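/- Let ρ₀ satisfy the stated first-order equation with limits a and b at ∓∞. (i) Every bounded, twice continuously differentiable v : ℝ → ℝ with v''(z) = f_A(ρ₀(z))v(z) for all z ∈ ℝ is of the form v = c·ρ₀' for some constant c ∈ ℝ. (ii) Every bounded, twice continuously differentiable v : ℝ → ℝ with v''(z) = f_B(ρ₀(z))v(z) for all z ∈ ℝ is of the form v = c·ρ₀ for some constant c ∈ ℝ. -/

import Mathlib

open Filter

/-- `f_A(ρ) = (ρ² − a²)(ρ² − b²)(2ρ² − a² − b²) + 2((2ρ² − a² − b²)² + 2(ρ² − a²)(ρ² − b²))ρ²`. -/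
noncomputable def fA (a b ρ : ℝ) : ℝ :=
  (ρ ^ 2 - a ^ 2) * (ρ ^ 2 - b ^ 2) * (2 * ρ ^ 2 - a ^ 2 - b ^ 2)
    + 2 * ((2 * ρ ^ 2 - a ^ 2 - b ^ 2) ^ 2
        + 2 * (ρ ^ 2 - a ^ 2) * (ρ ^ 2 - b ^ 2)) * ρ ^ 2

/-- `f_B(ρ) = (ρ² − a²)(ρ² − b²)(2ρ² − a² − b²)`. -/
noncomputable def fB (a b ρ : ℝ) : ℝ :=
  (ρ ^ 2 - a ^ 2) * (ρ ^ 2 - b ^ 2) * (2 * ρ ^ 2 - a ^ 2 - b ^ 2)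

open Filter

lemma aux_prop (v v' w w' q : ℝ → ℝ) (K M : ℝ)
    (hv : ∀ z, HasDerivAt v (v' z) z) (hv' : ∀ z, HasDerivAt v' (q z * v z) z)
    (hw : ∀ z, HasDerivAt w (w' z) z) (hw' : ∀ z, HasDerivAt w' (q z * w z) z)
    (hpos : ∀ z, 0 < w z) (hK : ∀ z, |w z| ≤ K) (hM : ∀ z, |v z| ≤ M)
    (hlim : Tendsto w' atTop (nhds 0)) : ∃ c : ℝ, ∀ z, v z = c * w z := by
  have hWd : ∀ z, HasDerivAt (fun z => v' z * w z - v z * w' z) 0 z := by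
    intro z
    have h := ((hv' z).mul (hw z)).sub ((hv z).mul (hw' z))
    refine HasDerivAt.congr_deriv h ?_
    ring
  have hWc : ∀ x y, v' x * w x - v x * w' x = v' y * w y - v y * w' y := fun x y =>
    is_const_of_deriv_eq_zero (fun z => (hWd z).differentiableAt) (fun z => (hWd z).deriv) x y
  have hxi : ∀ n : ℕ, ∃ ξ : ℝ, (n : ℝ) ≤ ξ ∧ |v' ξ| ≤ 2 * M / ((n : ℝ) + 1) := by
    intro n
    have hn : (0 : ℝ) < (n : ℝ) + 1 := by positivity
    obtain ⟨ξ, hξ, he⟩ := exists_hasDerivAt_eq_slope v v'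
      (show (n : ℝ) < n + (n + 1) by linarith)
      (fun z _ => (hv z).continuousAt.continuousWithinAt) (fun z _ => hv z)
    refine ⟨ξ, hξ.1.le, ?_⟩
    rw [he, add_sub_cancel_left, abs_div, abs_of_pos hn]
    gcongr
    have h1 := abs_sub (v (n + (n + 1))) (v n)
    linarith [hM (n + (n + 1)), hM n]
  choose ξ hξ1 hξ2 using hxi
  have hξt : Tendsto ξ atTop atTop :=
    tendsto_atTop_mono hξ1 tendsto_natCast_atTop_atTop
  have hv0 : Tendsto (fun n => v' (ξ n)) atTop (nhds 0) := by
    apply squeeze_zero_norm hξ2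
    have := (tendsto_one_div_add_atTop_nhds_zero_nat (𝕜 := ℝ)).const_mul (2 * M)
    simpa [div_eq_mul_inv] using this
  have hw0 : Tendsto (fun n => w' (ξ n)) atTop (nhds 0) := hlim.comp hξt
  have hW0 : ∀ z, v' z * w z - v z * w' z = 0 := by
    intro z
    have h1 : Tendsto (fun n => |v' (ξ n)| * K + M * |w' (ξ n)|) atTop (nhds 0) := by
      simpa using (hv0.abs.mul_const K).add (hw0.abs.const_mul M)
    have h2 : ∀ n, |v' z * w z - v z * w' z| ≤ |v' (ξ n)| * K + M * |w' (ξ n)| := by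
      intro n
      rw [hWc z (ξ n)]
      refine (abs_sub _ _).trans ?_
      rw [abs_mul, abs_mul]
      gcongr
      · exact hK _
      · exact hM _
    exact abs_nonpos_iff.1 (ge_of_tendsto' h1 h2)
  have hqd : ∀ z, HasDerivAt (fun z => v z / w z) 0 z := by
    intro z
    have h := (hv z).div (hw z) (hpos z).ne'
    rw [hW0 z, zero_div] at h
    exact h
  refine ⟨v 0 / w 0, fun z => ?_⟩
  have h : v z / w z = v 0 / w 0 :=
    is_const_of_deriv_eq_zero (fun z => (hqd z).differentiableAt) (fun z => (hqd z).deriv) z 0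
  rw [← h, div_mul_cancel₀ _ (hpos z).ne']

/-- (i) Every bounded `C²` solution of `v'' = f_A(ρ₀)v` is a multiple of
`ρ₀'`. (ii) Every bounded `C²` solution of `v'' = f_B(ρ₀)v` is a multiple of `ρ₀`. -/
theorem statement14 (a b : ℝ) (ha : 0 < a) (hab : a < b) (ρ₀ : ℝ → ℝ)
    (hreg : ContDiff ℝ 1 ρ₀)
    (hderiv : ∀ z, deriv ρ₀ z =
      Real.sqrt 2 / 2 * ((ρ₀ z) ^ 2 - a ^ 2) * (b ^ 2 - (ρ₀ z) ^ 2))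
    (hbnd : ∀ z, a < ρ₀ z ∧ ρ₀ z < b)
    (hbot : Tendsto ρ₀ atBot (nhds a))
    (htop : Tendsto ρ₀ atTop (nhds b)) :
    (∀ v : ℝ → ℝ, ContDiff ℝ 2 v → (∃ M, ∀ z, |v z| ≤ M) →
      (∀ z, deriv (deriv v) z = fA a b (ρ₀ z) * v z) →
      ∃ c : ℝ, ∀ z, v z = c * deriv ρ₀ z) ∧
    (∀ v : ℝ → ℝ, ContDiff ℝ 2 v → (∃ M, ∀ z, |v z| ≤ M) →
      (∀ z, deriv (deriv v) z = fB a b (ρ₀ z) * v z) →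
      ∃ c : ℝ, ∀ z, v z = c * ρ₀ z) := by
  have hs : Real.sqrt 2 ^ 2 = 2 := Real.sq_sqrt (by norm_num)
  have hρ : ∀ z, HasDerivAt ρ₀ (deriv ρ₀ z) z := fun z =>
    (hreg.differentiable (by norm_num) z).hasDerivAt
  have hρ2 : ∀ z, HasDerivAt (deriv ρ₀) (fB a b (ρ₀ z) * ρ₀ z) z := by
    intro z
    have e : deriv ρ₀ = fun z =>
      Real.sqrt 2 / 2 * ((ρ₀ z) ^ 2 - a ^ 2) * (b ^ 2 - (ρ₀ z) ^ 2) := funext hderiv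
    have h := ((((hρ z).pow 2).sub_const (a ^ 2)).const_mul (Real.sqrt 2 / 2)).mul
      (((hρ z).pow 2).const_sub (b ^ 2))
    rw [e]
    refine HasDerivAt.congr_deriv h ?_
    simp only [hderiv z, fB, Pi.pow_apply]
    norm_num
    linear_combination ((1 / 2) * ρ₀ z * (ρ₀ z ^ 2 - a ^ 2) * (b ^ 2 - ρ₀ z ^ 2)
      * (a ^ 2 + b ^ 2 - 2 * ρ₀ z ^ 2)) * hs
  have hρ3 : ∀ z, HasDerivAt (fun z => fB a b (ρ₀ z) * ρ₀ z)
      (fA a b (ρ₀ z) * deriv ρ₀ z) z := by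
    intro z
    have p := (hρ z).pow 2
    have h := (((p.sub_const (a ^ 2)).mul (p.sub_const (b ^ 2))).mul
      (((p.const_mul 2).sub_const (a ^ 2)).sub_const (b ^ 2))).mul (hρ z)
    unfold fB
    refine HasDerivAt.congr_deriv h ?_
    simp only [fA, Pi.pow_apply, Pi.mul_apply]
    norm_num
    ring
  have hl1 : Tendsto (deriv ρ₀) atTop (nhds 0) := by
    have h : Tendsto (fun z => Real.sqrt 2 / 2 * ((ρ₀ z) ^ 2 - a ^ 2) * (b ^ 2 - (ρ₀ z) ^ 2))
        atTop (nhds (Real.sqrt 2 / 2 * (b ^ 2 - a ^ 2) * (b ^ 2 - b ^ 2))) :=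
      (((htop.pow 2).sub_const _).const_mul _).mul ((htop.pow 2).const_sub _)
    rw [funext hderiv]
    simpa using h
  have hl2 : Tendsto (fun z => fB a b (ρ₀ z) * ρ₀ z) atTop (nhds 0) := by
    have h : Tendsto (fun z => fB a b (ρ₀ z) * ρ₀ z) atTop (nhds (fB a b b * b)) := by
      have p := htop.pow 2
      exact (((p.sub_const _).mul (p.sub_const _)).mul
        (((p.const_mul 2).sub_const _).sub_const _)).mul htop
    simpa [fB] using h
  have hvd : ∀ v : ℝ → ℝ, ContDiff ℝ 2 v →
      (∀ z, HasDerivAt v (deriv v z) z) ∧ ∀ z, HasDerivAt (deriv v) (deriv (deriv v) z) z := by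
    intro v hv
    have h2 : ContDiff ℝ (1 + 1) v := by simpa [one_add_one_eq_two] using hv
    have h1 := (contDiff_succ_iff_deriv.1 h2).2.2
    exact ⟨fun z => (hv.differentiable (by norm_num) z).hasDerivAt,
      fun z => (h1.differentiable (by norm_num) z).hasDerivAt⟩
  have hpos : ∀ z, 0 < deriv ρ₀ z := by
    intro z
    rw [hderiv]
    obtain ⟨h1, h2⟩ := hbnd z
    have : 0 < ρ₀ z ^ 2 - a ^ 2 := by nlinarith
    have : 0 < b ^ 2 - ρ₀ z ^ 2 := by nlinarith
    positivity
  constructor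
  · rintro v hv ⟨M, hM⟩ he
    obtain ⟨d1, d2⟩ := hvd v hv
    refine aux_prop v (deriv v) (deriv ρ₀) _ (fun z => fA a b (ρ₀ z))
      (Real.sqrt 2 / 2 * (b ^ 2) * b ^ 2) M d1
      (fun z => he z ▸ d2 z) hρ2 hρ3 hpos (fun z => ?_) hM hl2
    rw [abs_of_pos (hpos z), hderiv]
    obtain ⟨h1, h2⟩ := hbnd z
    have : 0 < ρ₀ z ^ 2 - a ^ 2 := by nlinarith
    have : 0 < b ^ 2 - ρ₀ z ^ 2 := by nlinarith
    have h3 : ρ₀ z ^ 2 - a ^ 2 ≤ b ^ 2 := by nlinarith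
    have h4 : b ^ 2 - ρ₀ z ^ 2 ≤ b ^ 2 := by nlinarith
    gcongr
  · rintro v hv ⟨M, hM⟩ he
    obtain ⟨d1, d2⟩ := hvd v hv
    refine aux_prop v (deriv v) ρ₀ _ (fun z => fB a b (ρ₀ z)) b M d1
      (fun z => he z ▸ d2 z) hρ hρ2 (fun z => ha.trans (hbnd z).1) (fun z => ?_) hM hl1
    rw [abs_of_pos (ha.trans (hbnd z).1)]
    exact (hbnd z).2.le
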